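/- Let X be a finite-dimensional real inner product space, let C¹, C² ⊆ X be nonempty closed convex sets with C = C¹ ∩ C² nonempty, and suppose the normal cone decomposition N_C(x) = N_{C¹}(x) + N_{C²}(x) holds for every x ∈ C. Let F : X → X be α-cocoercive with α > 1/2 and assume the variational inequality VI(F, C) has a solution. Define the Davis–Yin operator T(z) = z − P_{C¹}(z) + P_{C²}(2P_{C¹}(z) − z − F(P_{C¹}(z))). Then for every initial point z¹ ∈ X, the sequence z^{n+1} = T(z^n) converges to a fixed point z∘ of T, and the sequence P_{C¹}(z^n) converges to the point x∘ = P_{C¹}(z∘), which is a solution of VI(F, C). -/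

import Mathlib

open RealInnerProductSpace

theorem dy_proj {X : Type*} [NormedAddCommGroup X] [InnerProductSpace ℝ X]
    (K : Set X) (hK : Convex ℝ K) (P : X → X)
    (hP : ∀ z, P z ∈ K ∧ ∀ x ∈ K, ‖z - P z‖ ≤ ‖z - x‖) (z : X) :
    ∀ y ∈ K, ⟪z - P z, y - P z⟫ ≤ 0 := by
  have hne : Nonempty K := ⟨⟨P z, (hP z).1⟩⟩
  refine (norm_eq_iInf_iff_real_inner_le_zero hK (hP z).1).1 ?_
  apply le_antisymm
  · exact le_ciInf fun w => (hP z).2 w w.2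
  · exact ciInf_le (f := fun w : K => ‖z - w‖)
      ⟨0, by rintro _ ⟨w, rfl⟩; exact norm_nonneg _⟩ ⟨P z, (hP z).1⟩

theorem dy_firm {X : Type*} [NormedAddCommGroup X] [InnerProductSpace ℝ X]
    (K : Set X) (hK : Convex ℝ K) (P : X → X)
    (hP : ∀ z, P z ∈ K ∧ ∀ x ∈ K, ‖z - P z‖ ≤ ‖z - x‖) (z w : X) :
    0 ≤ ⟪(z - w) - (P z - P w), P z - P w⟫ := by
  have h1 := dy_proj K hK P hP z (P w) (hP w).1
  have h2 := dy_proj K hK P hP w (P z) (hP z).1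
  simp only [inner_sub_left, inner_sub_right] at *
  linarith

theorem dy_uniq {X : Type*} [NormedAddCommGroup X] [InnerProductSpace ℝ X]
    (K : Set X) (hK : Convex ℝ K) (P : X → X)
    (hP : ∀ z, P z ∈ K ∧ ∀ x ∈ K, ‖z - P z‖ ≤ ‖z - x‖) (z x : X) (hx : x ∈ K)
    (h : ∀ y ∈ K, ⟪z - x, y - x⟫ ≤ 0) : P z = x := by
  have h1 := dy_proj K hK P hP z x hx
  have h2 := h (P z) (hP z).1
  have h3 : ⟪P z - x, P z - x⟫ ≤ 0 := by
    simp only [inner_sub_left, inner_sub_right] at *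
    linarith
  rw [real_inner_self_eq_norm_sq] at h3
  have h4 : ‖P z - x‖ = 0 := by nlinarith [norm_nonneg (P z - x)]
  exact sub_eq_zero.1 (norm_eq_zero.1 h4)

theorem dy_lip {X : Type*} [NormedAddCommGroup X] [InnerProductSpace ℝ X]
    (T : X → X) (h : ∀ z w, ‖T z - T w‖ ^ 2 ≤ ‖z - w‖ ^ 2) : Continuous T := by
  refine (LipschitzWith.of_dist_le_mul (K := 1) fun z w => ?_).continuous
  rw [dist_eq_norm, dist_eq_norm, NNReal.coe_one, one_mul]
  exact (sq_le_sq₀ (norm_nonneg _) (norm_nonneg _)).1 (h z w)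

theorem dy_key {X : Type*} [NormedAddCommGroup X] [InnerProductSpace ℝ X]
    (d a b f : X) (α : ℝ) (hα : 1 / 2 < α)
    (h1 : 0 ≤ ⟪d - a, a⟫) (h2 : 0 ≤ ⟪(2 : ℝ) • a - d - f - b, b⟫)
    (h3 : α * ‖f‖ ^ 2 ≤ ⟪f, a⟫) :
    ‖d - (a - b)‖ ^ 2 ≤ ‖d‖ ^ 2 - (1 - 1 / (2 * α)) * ‖a - b‖ ^ 2 := by
  have h4 : 0 ≤ ‖(2 * α) • f - (a - b)‖ ^ 2 / (2 * α) := by positivity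
  have e : ‖(2 * α) • f - (a - b)‖ ^ 2 / (2 * α)
      = 2 * α * ‖f‖ ^ 2 - 2 * ⟪f, a - b⟫ + 1 / (2 * α) * ‖a - b‖ ^ 2 := by
    rw [norm_sub_sq_real, norm_smul, inner_smul_left, Real.norm_of_nonneg (by linarith)]
    simp only [conj_trivial]
    have : α ≠ 0 := by linarith
    field_simp
  rw [e] at h4
  have e2 := norm_sub_sq_real d (a - b)
  have e3 := norm_sub_sq_real a b
  have ea := real_inner_self_eq_norm_sq a
  have eb := real_inner_self_eq_norm_sq b
  simp only [inner_sub_left, inner_sub_right, inner_smul_left, conj_trivial] at *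
  linarith

theorem dy_conv {X : Type*} [NormedAddCommGroup X] [InnerProductSpace ℝ X]
    [FiniteDimensional ℝ X] (T : X → X) (c : ℝ) (hc : 0 < c)
    (h : ∀ z w, ‖T z - T w‖ ^ 2 ≤ ‖z - w‖ ^ 2 - c * ‖(z - w) - (T z - T w)‖ ^ 2)
    (w : X) (hw : T w = w) (z : X) :
    ∃ z₀, T z₀ = z₀ ∧ Filter.Tendsto (fun n : ℕ => T^[n] z) Filter.atTop (nhds z₀) := by
  have hne : ∀ z w, ‖T z - T w‖ ^ 2 ≤ ‖z - w‖ ^ 2 := fun z w => by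
    have := h z w
    have : 0 ≤ c * ‖(z - w) - (T z - T w)‖ ^ 2 := by positivity
    linarith
  have hcont := dy_lip T hne
  have hstep : ∀ v, T v = v → Antitone fun n : ℕ => ‖T^[n] z - v‖ := fun v hv => by
    refine antitone_nat_of_succ_le fun n => ?_
    have := hne (T^[n] z) v
    rw [hv, ← Function.iterate_succ_apply' T] at this
    exact (sq_le_sq₀ (norm_nonneg _) (norm_nonneg _)).1 this
  have : ProperSpace X := FiniteDimensional.proper ℝ X
  have hmem : ∀ n, T^[n] z ∈ Metric.closedBall w ‖z - w‖ := fun n => by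
    rw [mem_closedBall_iff_norm]
    exact hstep w hw (Nat.zero_le n)
  obtain ⟨z₀, -, φ, hφ, hlim⟩ := (isCompact_closedBall w ‖z - w‖).tendsto_subseq hmem
  -- squared distances converge
  have hsq : ∃ l, Filter.Tendsto (fun n : ℕ => ‖T^[n] z - w‖) Filter.atTop (nhds l) :=
    ⟨_, tendsto_atTop_ciInf (hstep w hw)
      ⟨0, by rintro _ ⟨n, rfl⟩; exact norm_nonneg _⟩⟩
  obtain ⟨l, hl⟩ := hsq
  have hdiff : Filter.Tendsto (fun n : ℕ => ‖T^[n] z - w‖ ^ 2 - ‖T^[n + 1] z - w‖ ^ 2)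
      Filter.atTop (nhds 0) := by
    have := (hl.pow 2).sub (((Filter.tendsto_add_atTop_iff_nat 1).2 hl).pow 2)
    simpa using this
  have hd2 := hdiff.comp hφ.tendsto_atTop
  have hres : Filter.Tendsto (fun n : ℕ => c * ‖T^[φ n] z - T (T^[φ n] z)‖ ^ 2)
      Filter.atTop (nhds 0) := by
    refine squeeze_zero (fun n => by positivity) (fun n => ?_) hd2
    have := h (T^[φ n] z) w
    rw [hw, sub_sub_sub_cancel_right, ← Function.iterate_succ_apply' T] at this
    rw [← Function.iterate_succ_apply' T]
    simp only [Function.comp]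
    linarith
  have hres2 : Filter.Tendsto (fun n : ℕ => c * ‖T^[φ n] z - T (T^[φ n] z)‖ ^ 2)
      Filter.atTop (nhds (c * ‖z₀ - T z₀‖ ^ 2)) := by
    have g : Continuous fun x => c * ‖x - T x‖ ^ 2 := by fun_prop
    exact (g.tendsto z₀).comp hlim
  have h0 := tendsto_nhds_unique hres2 hres
  have hfix : T z₀ = z₀ := by
    rcases mul_eq_zero.1 h0 with h0 | h0
    · exact absurd h0 hc.ne'
    · exact (sub_eq_zero.1 (norm_eq_zero.1 (pow_eq_zero_iff two_ne_zero |>.1 h0))).symm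
  refine ⟨z₀, hfix, ?_⟩
  rw [tendsto_iff_norm_sub_tendsto_zero]
  have hsub := tendsto_iff_norm_sub_tendsto_zero.1 hlim
  exact (tendsto_iff_tendsto_subseq_of_antitone (hstep z₀ hfix) hφ.tendsto_atTop).2 hsub

/-- Convergence of the Davis–Yin (N-FPN) iteration: under the normal cone decomposition
`N_C = N_{C₁} + N_{C₂}` on `C = C₁ ∩ C₂`, with `F` `α`-cocoercive (`α > 1/2`) and the
variational inequality `VI(F, C)` solvable, the iteration `zⁿ⁺¹ = T zⁿ` of the Davis–Yin
operator converges from any starting point to a fixed point `z₀` of `T`, the projections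
`P₁ zⁿ` converge to `x₀ = P₁ z₀`, and `x₀` solves `VI(F, C)`. -/
theorem stmt_11 {X : Type*} [NormedAddCommGroup X] [InnerProductSpace ℝ X]
    [FiniteDimensional ℝ X]
    (C₁ C₂ : Set X)
    (h₁ne : C₁.Nonempty) (h₁cl : IsClosed C₁) (h₁cv : Convex ℝ C₁)
    (h₂ne : C₂.Nonempty) (h₂cl : IsClosed C₂) (h₂cv : Convex ℝ C₂)
    (C : Set X) (hC : C = C₁ ∩ C₂) (hCne : C.Nonempty)
    (hNC : ∀ x ∈ C, ∀ w : X,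
      (∀ y ∈ C, ⟪w, y - x⟫ ≤ 0) ↔
        ∃ u v : X, (∀ y ∈ C₁, ⟪u, y - x⟫ ≤ 0) ∧ (∀ y ∈ C₂, ⟪v, y - x⟫ ≤ 0) ∧ w = u + v)
    (F : X → X) (α : ℝ) (hα : 1 / 2 < α)
    (hF : ∀ x y : X, α * ‖F x - F y‖ ^ 2 ≤ ⟪F x - F y, x - y⟫)
    (hVI : ∃ x₀, x₀ ∈ C ∧ ∀ x ∈ C, 0 ≤ ⟪F x₀, x - x₀⟫)
    (P₁ P₂ : X → X)
    (hP₁ : ∀ z, P₁ z ∈ C₁ ∧ ∀ x ∈ C₁, ‖z - P₁ z‖ ≤ ‖z - x‖)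
    (hP₂ : ∀ z, P₂ z ∈ C₂ ∧ ∀ x ∈ C₂, ‖z - P₂ z‖ ≤ ‖z - x‖)
    (T : X → X)
    (hT : ∀ z, T z = z - P₁ z + P₂ ((2 : ℝ) • P₁ z - z - F (P₁ z)))
    (z₁ : X) :
    ∃ z₀ : X, T z₀ = z₀ ∧
      Filter.Tendsto (fun n : ℕ => T^[n] z₁) Filter.atTop (nhds z₀) ∧
      Filter.Tendsto (fun n : ℕ => P₁ (T^[n] z₁)) Filter.atTop (nhds (P₁ z₀)) ∧
      (P₁ z₀ ∈ C ∧ ∀ x ∈ C, 0 ≤ ⟪F (P₁ z₀), x - P₁ z₀⟫) := by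
  have hf₁ := dy_firm C₁ h₁cv P₁ hP₁
  have hf₂ := dy_firm C₂ h₂cv P₂ hP₂
  have hT' : ∀ z w, ‖T z - T w‖ ^ 2 ≤
      ‖z - w‖ ^ 2 - (1 - 1 / (2 * α)) * ‖(z - w) - (T z - T w)‖ ^ 2 := by
    intro z w
    have key := dy_key (z - w) (P₁ z - P₁ w)
      (P₂ ((2 : ℝ) • P₁ z - z - F (P₁ z)) - P₂ ((2 : ℝ) • P₁ w - w - F (P₁ w)))
      (F (P₁ z) - F (P₁ w)) α hα (hf₁ z w) ?_ (hF _ _)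
    · have q : T z - T w = (z - w) - ((P₁ z - P₁ w) -
          (P₂ ((2 : ℝ) • P₁ z - z - F (P₁ z)) - P₂ ((2 : ℝ) • P₁ w - w - F (P₁ w)))) := by
        rw [hT z, hT w]
        abel
      rw [q, sub_sub_cancel]
      exact key
    · convert hf₂ ((2 : ℝ) • P₁ z - z - F (P₁ z)) ((2 : ℝ) • P₁ w - w - F (P₁ w)) using 2
      rw [smul_sub]
      abel
  have hc : 0 < 1 - 1 / (2 * α) := by
    rw [sub_pos, div_lt_one (by linarith)]
    linarith
  obtain ⟨x₀, hx₀, hx₀'⟩ := hVI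
  obtain ⟨u, v, hu, hv, huv⟩ := (hNC x₀ hx₀ (-F x₀)).1 (fun y hy => by
    rw [inner_neg_left]
    linarith [hx₀' y hy])
  have hx₀12 : x₀ ∈ C₁ ∩ C₂ := hC ▸ hx₀
  have e1 : P₁ (x₀ + u) = x₀ := dy_uniq C₁ h₁cv P₁ hP₁ _ _ hx₀12.1 (by simpa using hu)
  have e2 : P₂ (x₀ + v) = x₀ := dy_uniq C₂ h₂cv P₂ hP₂ _ _ hx₀12.2 (by simpa using hv)
  have hfix : T (x₀ + u) = x₀ + u := by
    rw [hT, e1]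
    have : (2 : ℝ) • x₀ - (x₀ + u) - F x₀ = x₀ + v := by
      rw [sub_eq_add_neg _ (F x₀), huv, two_smul]
      abel
    rw [this, e2]
    abel
  obtain ⟨z₀, hz₀, hlim⟩ := dy_conv T _ hc hT' _ hfix z₁
  have hP₁c : Continuous P₁ := by
    refine dy_lip P₁ fun z w => ?_
    have h1 := hf₁ z w
    have h2 := norm_sub_sq_real (z - w) (P₁ z - P₁ w)
    have h3 := sq_nonneg ‖(z - w) - (P₁ z - P₁ w)‖
    rw [inner_sub_left, real_inner_self_eq_norm_sq] at h1
    have h4 := real_inner_le_norm (z - w) (P₁ z - P₁ w)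
    nlinarith [sq_nonneg (‖z - w‖ - ‖P₁ z - P₁ w‖)]
  have h12 : P₂ ((2 : ℝ) • P₁ z₀ - z₀ - F (P₁ z₀)) = P₁ z₀ := by
    have := hT z₀
    rw [hz₀, sub_add, eq_comm, sub_eq_self, sub_eq_zero] at this
    exact this.symm
  refine ⟨z₀, hz₀, hlim, (hP₁c.tendsto z₀).comp hlim, ?_, ?_⟩
  · rw [hC]
    exact ⟨(hP₁ z₀).1, h12 ▸ (hP₂ _).1⟩
  · intro x hx
    rw [hC] at hx
    have g1 := dy_proj C₁ h₁cv P₁ hP₁ z₀ x hx.1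
    have g2 := dy_proj C₂ h₂cv P₂ hP₂ ((2 : ℝ) • P₁ z₀ - z₀ - F (P₁ z₀)) x hx.2
    rw [h12, two_smul] at g2
    simp only [inner_sub_left, inner_add_left] at *
    linarith
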